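/- Upper bound for the fast-player marker game: for every v ∈ (0,1] there is a strategy (f, z, g) for the marker game in which the fast player holds the marker, with drop time z = 1/(3v+1), whose four rendezvous times, arranged in increasing order, are exactly 3/(3v+1), (3v+5)/((v+1)(3v+1)), (9v+5)/((v+1)(3v+1)), and (3v+7)/(v+1)²; consequently W(v) ≤ (24v²+52v+20)/((v+1)²(3v+1)) for every v ∈ (0,1]. -/

import Mathlib

/-!
The strategy behind the bound. Put `z = 1/(3v+1)` and `a = 2/(v+1)`.
Player I runs at speed `1`: right until time `z` (dropping the marker at position `z`), left
until time `3z`, right until time `3z + a`, then left forever. Player II runs at speed `v`,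
forward until time `3z` and backward afterwards.

The choice of `z` makes two events happen at time `3z`: player I, at `-z`, meets the agent
`(-1, 1)`, and the agent `(1, -1)` reaches the marker at `z`. The latter therefore keeps
moving left instead of turning, and closes the gap `2z` with player I at speed `1 + v`, which
gives the second rendezvous at `3z + az`. The agents `(1, 1)` and `(-1, -1)` turn back at time
`3z` without ever seeing the marker before rendezvous; player I meets the first of them at
`3z + a` and then turns to meet the other at `a (a + 3/2)`. The lemmas `rdv_fwd_fwd`, …,
`rdv_bwd_bwd` verify these four meetings, and `profile_exists` assembles the profile.

All the verifications are linear in the products of `v` with the relevant times, once the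
relations `3vz = 1 - z` and `a + va = 2` are known.
-/

open Set

/-- `PiecewiseLin S g` : `g` starts at `0` and is piecewise linear with finitely many
pieces, each slope belonging to `S` (the last piece extending to `+∞`). -/
def PiecewiseLin (S : Set ℝ) (g : ℝ → ℝ) : Prop :=
  g 0 = 0 ∧ ∃ (n : ℕ) (τ : ℕ → ℝ) (c : ℕ → ℝ),
    τ 0 = 0 ∧ (∀ i, i < n → τ i ≤ τ (i + 1)) ∧ (∀ i, i ≤ n → c i ∈ S) ∧
    (∀ i, i < n → ∀ t, τ i ≤ t → t ≤ τ (i + 1) → g t = g (τ i) + c i * (t - τ i)) ∧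
    (∀ t, τ n ≤ t → g t = g (τ n) + c n * (t - τ n))

/-- `AgentTraj f g z sAfter o b p` : `p` is the trajectory of the agent of player II
with starting point `o` and forward direction `b`, when player I moves along `f` and
drops a marker at position `f z` at time `z`, and player II's strategy is `g`. The agent
follows `o + b • g` until the first time `τ ≥ z` (if any, occurring before its rendezvous
with player I) at which it stands on the marker; from then on it moves at speed `sAfter`
in its direction of motion at time `τ⁻`. -/
def AgentTraj (f g : ℝ → ℝ) (z sAfter o b : ℝ) (p : ℝ → ℝ) : Prop :=
  -- either the agent never finds the marker before its rendezvous and `p = o + b • g` …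
  ((∀ t, p t = o + b * g t) ∧
    ¬∃ τ, z ≤ τ ∧ o + b * g τ = f z ∧ ∀ t, 0 ≤ t → t < τ → f t ≠ o + b * g t) ∨
  -- … or it finds the marker at time `τ`, before its rendezvous, and continues at
  -- speed `sAfter` in its direction `d` of motion at time `τ⁻` (of left slope `c`).
  ∃ τ c d, z ≤ τ ∧ o + b * g τ = f z ∧
    (∀ t, 0 ≤ t → t < τ → f t ≠ o + b * g t) ∧
    (∀ t, z ≤ t → t < τ → o + b * g t ≠ f z) ∧
    (0 < τ → ∃ ε > 0, ∀ s, τ - ε ≤ s → s ≤ τ → o + b * g s = o + b * g τ + c * (s - τ)) ∧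
    (d = sAfter ∨ d = -sAfter) ∧ (0 < c → d = sAfter) ∧ (c < 0 → d = -sAfter) ∧
    (∀ t, 0 ≤ t → t ≤ τ → p t = o + b * g t) ∧
    (∀ t, τ ≤ t → p t = o + b * g τ + d * (t - τ))

/-- The rendezvous time of player I (at `f`) with an agent moving along `p`. -/
noncomputable def rdvTime (f p : ℝ → ℝ) : ℝ := sInf {t | 0 ≤ t ∧ f t = p t}

/-- A full strategy profile for the marker game: player I plays a piecewise linear
trajectory `f` with slopes in `Sf` and drops the marker at time `z ≥ 0`; player II plays
a piecewise linear `g` with slopes in `Sg`; `p o b` is the resulting trajectory of the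
agent `(o, b)`, which moves at speed `sAfter` after finding the marker, and each of the
four rendezvous times is finite. -/
def MarkerProfile (Sf Sg : Set ℝ) (sAfter : ℝ) (f g : ℝ → ℝ) (z : ℝ)
    (p : ℝ → ℝ → ℝ → ℝ) : Prop :=
  PiecewiseLin Sf f ∧ PiecewiseLin Sg g ∧ 0 ≤ z ∧
    ∀ o b : ℝ, (o = 1 ∨ o = -1) → (b = 1 ∨ b = -1) →
      AgentTraj f g z sAfter o b (p o b) ∧ {t | 0 ≤ t ∧ f t = p o b t}.Nonempty

/-- The sum of the four rendezvous times in the marker game. -/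
noncomputable def markerSum (f : ℝ → ℝ) (p : ℝ → ℝ → ℝ → ℝ) : ℝ :=
  rdvTime f (p 1 1) + rdvTime f (p 1 (-1)) + rdvTime f (p (-1) 1) + rdvTime f (p (-1) (-1))

/-- The value of the marker game: infimum of the sum of the four rendezvous times. -/
noncomputable def markerValue (Sf Sg : Set ℝ) (sAfter : ℝ) : ℝ :=
  sInf {S | ∃ f g z p, MarkerProfile Sf Sg sAfter f g z p ∧ S = markerSum f p}

/-- `Vm v` : value of the marker game where the slow player (speed bound `v`) holds the
marker and the fast player (speed bound `1`, always moving at full speed) searches. -/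
noncomputable def Vm (v : ℝ) : ℝ := markerValue (Icc (-v) v) {-1, 1} 1

/-- `W v` : value of the marker game where the fast player (speed bound `1`) holds the
marker and the slow player (speed bound `v`) searches, moving at maximal speed `v` after
finding the marker. -/
noncomputable def W (v : ℝ) : ℝ := markerValue (Icc (-1) 1) (Icc (-v) v) v

/-- Player I's trajectory: right, left, right, left at unit speed, with turning times
`z`, `3z` and `3z + a`. -/
noncomputable def fastPath (z a t : ℝ) : ℝ :=
  if t ≤ z then t else if t ≤ 3 * z then 2 * z - t
  else if t ≤ 3 * z + a then t - 4 * z else 2 * z + 2 * a - t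

/-- Player II's strategy: forward at speed `v` until time `3z`, then backward. -/
noncomputable def slowPath (v z t : ℝ) : ℝ :=
  if t ≤ 3 * z then v * t else 6 * (v * z) - v * t

/-- The trajectory of the agent `(1, -1)`, which finds the marker at time `3z` and
keeps moving left. -/
noncomputable def markedPath (v z t : ℝ) : ℝ :=
  if t ≤ 3 * z then 1 - v * t else z - v * (t - 3 * z)

/-- The four agents' trajectories: only the agent `(1, -1)` deviates from `o + b * g`. -/
noncomputable def agentPath (v z o b t : ℝ) : ℝ :=
  if o = 1 ∧ b = -1 then markedPath v z t else o + b * slowPath v z t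

/-- `FirstMeeting f p T` : `T` is the first nonnegative time at which `f` and `p` agree. -/
def FirstMeeting (f p : ℝ → ℝ) (T : ℝ) : Prop :=
  0 ≤ T ∧ f T = p T ∧ ∀ t, 0 ≤ t → t < T → f t ≠ p t

lemma FirstMeeting.rdvTime_eq {f p : ℝ → ℝ} {T : ℝ} (h : FirstMeeting f p T) :
    rdvTime f p = T := by
  obtain ⟨h0, he, hlt⟩ := h
  refine IsLeast.csInf_eq ⟨⟨h0, he⟩, fun t ht => ?_⟩
  by_contra! hc
  exact hlt t ht.1 hc ht.2

lemma FirstMeeting.nonempty {f p : ℝ → ℝ} {T : ℝ} (h : FirstMeeting f p T) :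
    {t | 0 ≤ t ∧ f t = p t}.Nonempty :=
  ⟨T, h.1, h.2.1⟩

/-- An agent that avoids the marker until its rendezvous just follows `o + b * g`. -/
lemma FirstMeeting.agentTraj {f g : ℝ → ℝ} {z s o b T : ℝ}
    (h : FirstMeeting f (fun t => o + b * g t) T)
    (hm : ∀ t, z ≤ t → t ≤ T → o + b * g t ≠ f z) :
    AgentTraj f g z s o b (fun t => o + b * g t) := by
  refine Or.inl ⟨fun t => rfl, ?_⟩
  rintro ⟨τ, hz, he, hr⟩
  rcases le_or_gt τ T with hle | hlt
  · exact hm τ hz hle he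
  · exact hr T h.1 hlt h.2.1

lemma fastPath_piecewiseLin {z a : ℝ} (hz : 0 < z) (ha : 0 < a) :
    PiecewiseLin (Icc (-1) 1) (fastPath z a) := by
  refine ⟨by simp [fastPath, hz.le], 3,
    fun i => if i = 0 then 0 else if i = 1 then z else if i = 2 then 3 * z else 3 * z + a,
    fun i => if i = 0 then 1 else if i = 1 then -1 else if i = 2 then 1 else -1, rfl, ?_, ?_, ?_, ?_⟩
  · intro i hi
    interval_cases i <;> norm_num <;> linarith
  · intro i hi
    dsimp only
    split_ifs <;> norm_num
  · intro i hi t h1 h2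
    interval_cases i <;> norm_num [fastPath] at * <;> split_ifs <;> linarith
  · intro t h1
    norm_num [fastPath] at *
    split_ifs <;> linarith

lemma slowPath_piecewiseLin {v z : ℝ} (hv : 0 < v) (hz : 0 < z) :
    PiecewiseLin (Icc (-v) v) (slowPath v z) := by
  refine ⟨by simp [slowPath, hz.le], 1, fun i => if i = 0 then 0 else 3 * z,
    fun i => if i = 0 then v else -v, rfl, ?_, ?_, ?_, ?_⟩
  · intro i hi
    obtain rfl : i = 0 := by omega
    norm_num
    linarith
  · intro i hi
    dsimp only
    split_ifs <;> exact ⟨by linarith, by linarith⟩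
  · intro i hi t h1 h2
    obtain rfl : i = 0 := by omega
    norm_num [slowPath] at *
    split_ifs <;> linarith
  · intro t h1
    norm_num [slowPath] at *
    split_ifs with h
    · obtain rfl : t = 3 * z := le_antisymm h h1
      ring
    · linarith

section Meetings

variable {v z a : ℝ}

lemma fastPath_drop : fastPath z a z = z := by simp [fastPath]

lemma rdv_fwd_fwd (hv : 0 < v) (hz : 0 < z) (hz1 : z < 1) (ha : 0 < a)
    (hvz : 3 * (v * z) = 1 - z) (hva : a + v * a = 2) :
    FirstMeeting (fastPath z a) (fun t => 1 + 1 * slowPath v z t) (3 * z + a) := by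
  refine ⟨by linarith, ?_, fun t h0 ht => ne_of_lt ?_⟩
  · dsimp only [fastPath, slowPath]
    split_ifs <;> linarith
  · have h1 := mul_lt_mul_of_pos_left ht hv
    have h2 := mul_nonneg hv.le h0
    dsimp only [fastPath, slowPath]
    split_ifs <;> linarith

lemma fwd_fwd_avoids (hv : 0 < v) (hz1 : z < 1)
    (hvz : 3 * (v * z) = 1 - z) (hva : a + v * a = 2) (haz : 2 * z < a) (t : ℝ) (h0 : 0 ≤ t)
    (ht : t ≤ 3 * z + a) : 1 + 1 * slowPath v z t ≠ z := by
  have h1 := mul_le_mul_of_nonneg_left ht hv.le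
  have h2 := mul_nonneg hv.le h0
  refine ne_of_gt ?_
  dsimp only [slowPath]
  split_ifs <;> linarith

lemma rdv_bwd_fwd (hv : 0 < v) (hz : 0 < z) (hvz : 3 * (v * z) = 1 - z) :
    FirstMeeting (fastPath z a) (fun t => -1 + 1 * slowPath v z t) (3 * z) := by
  refine ⟨by linarith, ?_, fun t h0 ht => ne_of_gt ?_⟩
  · dsimp only [fastPath, slowPath]
    split_ifs <;> linarith
  · have h1 := mul_lt_mul_of_pos_left ht hv
    dsimp only [fastPath, slowPath]
    split_ifs <;> linarith

lemma bwd_fwd_avoids (hv : 0 < v) (hz : 0 < z) (hvz : 3 * (v * z) = 1 - z) (t : ℝ)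
    (ht : t ≤ 3 * z) : -1 + 1 * slowPath v z t ≠ z := by
  have h1 := mul_le_mul_of_nonneg_left ht hv.le
  refine ne_of_lt ?_
  dsimp only [slowPath]
  split_ifs <;> linarith

lemma rdv_bwd_bwd (hv : 0 < v) (hv1 : v ≤ 1) (hz : 0 < z) (hz1 : z < 1) (ha : 0 < a)
    (hvz : 3 * (v * z) = 1 - z) {T : ℝ} (hT : T + v * T = 3 + 2 * a)
    (hT' : 3 * z + a < T) :
    FirstMeeting (fastPath z a) (fun t => -1 + -1 * slowPath v z t) T := by
  refine ⟨by linarith, ?_, fun t h0 ht => ne_of_gt ?_⟩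
  · dsimp only [fastPath, slowPath]
    split_ifs <;> linarith
  · have h1 := mul_lt_mul_of_pos_left ht hv
    have h2 := mul_nonneg hv.le h0
    rcases le_total t (3 * z) with c | c
    · dsimp only [fastPath, slowPath]
      split_ifs <;> linarith
    · -- on its second rightward leg player I does not lose ground, as `v ≤ 1`
      have h3 := mul_nonneg (sub_nonneg.2 hv1) (sub_nonneg.2 c)
      dsimp only [fastPath, slowPath]
      split_ifs <;> linarith

lemma bwd_bwd_avoids (hv : 0 < v) (hz : 0 < z) (hvz : 3 * (v * z) = 1 - z) {T : ℝ}
    (hT : T + v * T = 3 + 2 * a) (hT' : 2 * a < T - z) (t : ℝ) (h0 : 0 ≤ t) (ht : t ≤ T) :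
    -1 + -1 * slowPath v z t ≠ z := by
  have h1 := mul_le_mul_of_nonneg_left ht hv.le
  have h2 := mul_nonneg hv.le h0
  refine ne_of_lt ?_
  dsimp only [slowPath]
  split_ifs <;> linarith

lemma rdv_fwd_bwd (hv : 0 < v) (hz : 0 < z) (hz1 : z < 1) (ha : 0 < a)
    (hvz : 3 * (v * z) = 1 - z) (hva : a + v * a = 2) :
    FirstMeeting (fastPath z a) (markedPath v z) (3 * z + a * z) := by
  have haz : 0 < a * z := mul_pos ha hz
  have haz' : a * z < a := mul_lt_of_lt_one_right ha hz1
  have hvaz : a * z + v * (a * z) = 2 * z := by linear_combination z * hva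
  refine ⟨by linarith, ?_, fun t h0 ht => ne_of_lt ?_⟩
  · dsimp only [fastPath, markedPath]
    split_ifs <;> linarith
  · have h1 := mul_lt_mul_of_pos_left ht hv
    rcases le_total t (3 * z) with c | c
    · -- before time `3z` the agent is still to the right of the marker
      have h2 := mul_le_mul_of_nonneg_left c hv.le
      dsimp only [fastPath, markedPath]
      split_ifs with c1
      · have h3 := mul_le_mul_of_nonneg_left c1 hv.le
        linarith [mul_pos hv hz]
      all_goals linarith
    · dsimp only [fastPath, markedPath]
      split_ifs <;> linarith

/-- The agent `(1, -1)` reaches the marker exactly at time `3z`. -/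
lemma marked_agentTraj (hv : 0 < v) (hz : 0 < z)
    (hvz : 3 * (v * z) = 1 - z) :
    AgentTraj (fastPath z a) (slowPath v z) z v 1 (-1) (markedPath v z) := by
  have key : ∀ t, t < 3 * z → z < 1 + -1 * slowPath v z t := by
    intro t ht
    have h1 := mul_lt_mul_of_pos_left ht hv
    dsimp only [slowPath]
    split_ifs <;> linarith
  refine Or.inr ⟨3 * z, -v, -v, by linarith, ?_, fun t h0 ht => ?_, fun t _ ht => ?_,
    fun _ => ⟨1, one_pos, fun s _ hs => ?_⟩, Or.inr rfl, fun h => by linarith, fun _ => rfl,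
    fun t _ ht => ?_, fun t ht => ?_⟩
  · rw [fastPath_drop]
    simp only [slowPath, le_refl, if_true]
    linarith
  · refine ne_of_lt (lt_of_le_of_lt ?_ (key t ht))
    dsimp only [fastPath]
    split_ifs <;> linarith
  · rw [fastPath_drop]
    exact (key t ht).ne'
  · simp only [slowPath, le_refl, if_true, hs]
    ring
  · simp only [slowPath, markedPath, if_true, ht]
    ring
  · dsimp only [slowPath, markedPath]
    rw [if_pos le_rfl]
    split_ifs with h
    · obtain rfl : t = 3 * z := le_antisymm h ht
      ring
    · linarith

end Meetings

lemma rdvTime_nonneg (f p : ℝ → ℝ) : 0 ≤ rdvTime f p :=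
  Real.sInf_nonneg fun _ ht => ht.1

lemma markerValue_le {Sf Sg : Set ℝ} {s : ℝ} {f g : ℝ → ℝ} {z : ℝ} {p : ℝ → ℝ → ℝ → ℝ}
    (h : MarkerProfile Sf Sg s f g z p) : markerValue Sf Sg s ≤ markerSum f p := by
  refine csInf_le ⟨0, ?_⟩ ⟨f, g, z, p, h, rfl⟩
  rintro _ ⟨f, g, z, p, -, rfl⟩
  have := rdvTime_nonneg f
  exact add_nonneg (add_nonneg (add_nonneg (this _) (this _)) (this _)) (this _)

/-- The strategy profile together with its rendezvous times, agent by agent. -/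
lemma profile_exists {v : ℝ} (hv0 : 0 < v) (hv1 : v ≤ 1) :
    ∃ f g p, MarkerProfile (Icc (-1) 1) (Icc (-v) v) v f g (1 / (3 * v + 1)) p ∧
      rdvTime f (p 1 1) = (9 * v + 5) / ((v + 1) * (3 * v + 1)) ∧
      rdvTime f (p 1 (-1)) = (3 * v + 5) / ((v + 1) * (3 * v + 1)) ∧
      rdvTime f (p (-1) 1) = 3 / (3 * v + 1) ∧
      rdvTime f (p (-1) (-1)) = (3 * v + 7) / (v + 1) ^ 2 := by
  have hD : 0 < 3 * v + 1 := by linarith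
  have hE : 0 < v + 1 := by linarith
  obtain ⟨z, hzd⟩ : ∃ z, z = 1 / (3 * v + 1) := ⟨_, rfl⟩
  obtain ⟨a, had⟩ : ∃ a, a = 2 / (v + 1) := ⟨_, rfl⟩
  have hz : 0 < z := by rw [hzd]; positivity
  have ha : 0 < a := by rw [had]; positivity
  have hvz : 3 * (v * z) = 1 - z := by rw [hzd]; field_simp; ring
  have hva : a + v * a = 2 := by rw [had]; field_simp; ring
  have hz1 : z < 1 := by linarith [mul_pos hv0 hz]
  have haz : 2 * z < a := by
    rw [hzd, had, mul_one_div, div_lt_div_iff_of_pos_left two_pos hD hE]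
    linarith
  have ha1 : 1 ≤ a := by rw [had, le_div_iff₀ hE]; linarith
  have haa : a ≤ a * a := le_mul_of_one_le_left ha.le ha1
  have hT : a * (a + 3 / 2) + v * (a * (a + 3 / 2)) = 3 + 2 * a := by
    linear_combination (a + 3 / 2) * hva
  have hT1 : 3 * z + a < a * (a + 3 / 2) := by linarith
  have hT2 : 2 * a < a * (a + 3 / 2) - z := by linarith
  have e1 : agentPath v z 1 1 = fun t => 1 + 1 * slowPath v z t := by
    funext t; norm_num [agentPath]
  have e2 : agentPath v z 1 (-1) = markedPath v z := by
    funext t; norm_num [agentPath]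
  have e3 : agentPath v z (-1) 1 = fun t => -1 + 1 * slowPath v z t := by
    funext t; norm_num [agentPath]
  have e4 : agentPath v z (-1) (-1) = fun t => -1 + -1 * slowPath v z t := by
    funext t; norm_num [agentPath]
  have m1 := rdv_fwd_fwd hv0 hz hz1 ha hvz hva
  have m2 := rdv_fwd_bwd hv0 hz hz1 ha hvz hva
  have m3 := rdv_bwd_fwd hv0 hz (a := a) hvz
  have m4 := rdv_bwd_bwd hv0 hv1 hz hz1 ha hvz hT hT1
  refine ⟨fastPath z a, slowPath v z, agentPath v z, ?_, ?_, ?_, ?_, ?_⟩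
  · rw [← hzd]
    refine ⟨fastPath_piecewiseLin hz ha, slowPath_piecewiseLin hv0 hz, hz.le, ?_⟩
    rintro o b (rfl | rfl) (rfl | rfl)
    · rw [e1]
      refine ⟨m1.agentTraj fun t h0 ht => ?_, m1.nonempty⟩
      rw [fastPath_drop]
      exact fwd_fwd_avoids hv0 hz1 hvz hva haz t (hz.le.trans h0) ht
    · rw [e2]
      exact ⟨marked_agentTraj hv0 hz hvz, m2.nonempty⟩
    · rw [e3]
      refine ⟨m3.agentTraj fun t h0 ht => ?_, m3.nonempty⟩
      rw [fastPath_drop]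
      exact bwd_fwd_avoids hv0 hz hvz t ht
    · rw [e4]
      refine ⟨m4.agentTraj fun t h0 ht => ?_, m4.nonempty⟩
      rw [fastPath_drop]
      exact bwd_bwd_avoids hv0 hz hvz hT hT2 t (hz.le.trans h0) ht
  · rw [e1, m1.rdvTime_eq, hzd, had]; field_simp; ring
  · rw [e2, m2.rdvTime_eq, hzd, had]; field_simp; ring
  · rw [e3, m3.rdvTime_eq, hzd]; field_simp
  · rw [e4, m4.rdvTime_eq, had]; field_simp; ring

/-- Upper bound for the fast-player marker game: there is a strategy with drop time
`z = 1/(3v+1)` whose four rendezvous times, in increasing order, are exactly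
`3/(3v+1)`, `(3v+5)/((v+1)(3v+1))`, `(9v+5)/((v+1)(3v+1))` and `(3v+7)/(v+1)²`;
consequently `W v ≤ (24v²+52v+20)/((v+1)²(3v+1))`. -/
theorem fast_marker_game_upper_bound (v : ℝ) (hv0 : 0 < v) (hv1 : v ≤ 1) :
    (∃ f g z p, MarkerProfile (Icc (-1) 1) (Icc (-v) v) v f g z p ∧
      z = 1 / (3 * v + 1) ∧
      ({rdvTime f (p 1 1), rdvTime f (p 1 (-1)),
          rdvTime f (p (-1) 1), rdvTime f (p (-1) (-1))} : Multiset ℝ) =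
        {3 / (3 * v + 1), (3 * v + 5) / ((v + 1) * (3 * v + 1)),
          (9 * v + 5) / ((v + 1) * (3 * v + 1)), (3 * v + 7) / (v + 1) ^ 2}) ∧
    W v ≤ (24 * v ^ 2 + 52 * v + 20) / ((v + 1) ^ 2 * (3 * v + 1)) := by
  obtain ⟨f, g, p, hp, h1, h2, h3, h4⟩ := profile_exists hv0 hv1
  refine ⟨⟨f, g, _, p, hp, rfl, ?_⟩, ?_⟩
  · rw [h1, h2, h3, h4]
    simp only [Multiset.insert_eq_cons]
    -- reversing the first three entries by adjacent swaps
    rw [Multiset.cons_swap, Multiset.cons_swap (_ / _) (3 / _), Multiset.cons_swap]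
  · refine (markerValue_le hp).trans (le_of_eq ?_)
    rw [markerSum, h1, h2, h3, h4]
    have hD : 3 * v + 1 ≠ 0 := by linarith
    have hE : v + 1 ≠ 0 := by linarith
    field_simp
    ring
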